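/- For every closed term M of Λ⊕, the judgment M ⇓div (1 − Σ⟦M⟧v) holds, i.e. the probability 1 minus the total mass of the call-by-value small-step semantics of M is a derivable divergence probability for M. -/

import Mathlib

open scoped ENNReal

/-- Terms of Λ⊕ (and of Λ⊕⁺), in de Bruijn notation: variables, abstractions,
applications and binary (probabilistic) sums.  De Bruijn indices realize
"terms up to renaming of bound variables". -/
inductive Term : Type
  | var : ℕ → Term
  | lam : Term → Term
  | app : Term → Term → Term
  | choice : Term → Term → Term
  deriving DecidableEq

namespace Term

/-- Values: variables and abstractions. -/
inductive IsValue : Term → Prop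
  | var (n : ℕ) : IsValue (var n)
  | lam (M : Term) : IsValue (lam M)

/-- Boolean value test. -/
def isVal : Term → Bool
  | var _ => true
  | lam _ => true
  | _ => false

/-- Shifting of de Bruijn indices: add `d` to all indices `≥ c`. -/
def shift (d c : ℕ) : Term → Term
  | var n => if n < c then var n else var (n + d)
  | lam M => lam (shift d (c + 1) M)
  | app M N => app (shift d c M) (shift d c N)
  | choice M N => choice (shift d c M) (shift d c N)

/-- Capture-avoiding substitution `M[j := N]` (the variable `j` is consumed and
higher indices are decremented, as in a β-step). -/
def subst : Term → ℕ → Term → Term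
  | var n, j, N => if n = j then shift j 0 N else if j < n then var (n - 1) else var n
  | lam M, j, N => lam (subst M (j + 1) N)
  | app M L, j, N => app (subst M j N) (subst L j N)
  | choice M L, j, N => choice (subst M j N) (subst L j N)

/-- All free indices are `< n`. -/
def closedUnder : Term → ℕ → Prop
  | var m, n => m < n
  | lam M, n => closedUnder M (n + 1)
  | app M N, n => closedUnder M n ∧ closedUnder N n
  | choice M N, n => closedUnder M n ∧ closedUnder N n

/-- Closed terms: no free variables. -/
def Closed (M : Term) : Prop := closedUnder M 0

end Term

/-- (Sub)distributions are represented as functions from terms into `ℝ≥0∞`;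
genuine distributions (`IsDist`) are supported on values and have mass `≤ 1`. -/
abbrev PDist := Term → ℝ≥0∞

/-- The sum (total mass) `Σ𝒟` of a distribution. -/
noncomputable def dsum (D : PDist) : ℝ≥0∞ := ∑' M, D M

/-- The support of a distribution. -/
def dsupp (D : PDist) : Set Term := {M | D M ≠ 0}

/-- The everywhere-zero distribution `∅`. -/
noncomputable def dzero : PDist := fun _ => 0

/-- The Dirac distribution `{V^1}`. -/
noncomputable def dirac (V : Term) : PDist := fun M => if M = V then 1 else 0

/-- Being a genuine (sub)probability distribution: supported on values, with
total mass at most one. -/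
def IsDist (D : PDist) : Prop := (∀ M, D M ≠ 0 → M.IsValue) ∧ dsum D ≤ 1

/-- Call-by-value reduction `↦v`, relating a term to the (equiprobable) finite
sequence of its possible reducts. -/
inductive RedV : Term → List Term → Prop
  | beta {M V : Term} : V.IsValue → RedV (.app (.lam M) V) [M.subst 0 V]
  | choice {V W : Term} : V.IsValue → W.IsValue → RedV (.choice V W) [V, W]
  | appL {M N : Term} {Ls : List Term} :
      RedV M Ls → RedV (.app M N) (Ls.map (fun L => .app L N))
  | appR {V M : Term} {Ns : List Term} :
      V.IsValue → RedV M Ns → RedV (.app V M) (Ns.map (fun L => .app V L))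
  | choiceL {M N : Term} {Ls : List Term} :
      RedV M Ls → RedV (.choice M N) (Ls.map (fun L => .choice L N))
  | choiceR {V M : Term} {Ns : List Term} :
      V.IsValue → RedV M Ns → RedV (.choice V M) (Ns.map (fun L => .choice V L))

/-- Call-by-name reduction `↦n`. -/
inductive RedN : Term → List Term → Prop
  | beta {M N : Term} : RedN (.app (.lam M) N) [M.subst 0 N]
  | choice {M N : Term} : RedN (.choice M N) [M, N]
  | appL {M N : Term} {Ls : List Term} :
      RedN M Ls → RedN (.app M N) (Ls.map (fun L => .app L N))

/-- The inductive small-step convergence relation `⇒`, parametric in the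
underlying reduction relation: any term evaluates to `∅`; a value `V`
evaluates to `{V^1}`; and if `M ↦ N₁,…,Nₙ` and `Nᵢ ⇒ 𝒟ᵢ` then
`M ⇒ Σᵢ (1/n)𝒟ᵢ`. -/
inductive Conv (Red : Term → List Term → Prop) : Term → PDist → Prop
  | bot (M : Term) : Conv Red M dzero
  | val {V : Term} : V.IsValue → Conv Red V (dirac V)
  | step {M : Term} {Ns : List Term} (Ds : Fin Ns.length → PDist) :
      Red M Ns → (∀ i, Conv Red (Ns.get i) (Ds i)) →
      Conv Red M (fun W => (∑ i, Ds i W) / (Ns.length : ℝ≥0∞))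

/-- Call-by-value small-step convergence `⇒v`. -/
def SmallV : Term → PDist → Prop := Conv RedV

/-- Call-by-name small-step convergence `⇒n`. -/
def SmallN : Term → PDist → Prop := Conv RedN

/-- The small-step semantics `⟦M⟧`: the pointwise supremum of all distributions
derivable for `M`. -/
noncomputable def semOf (S : Term → PDist → Prop) (M : Term) : PDist :=
  fun W => ⨆ (D : PDist) (_ : S M D), D W

/-- Call-by-value small-step semantics `⟦M⟧v`. -/
noncomputable def semV : Term → PDist := semOf SmallV

/-- Call-by-name small-step semantics `⟦M⟧n`. -/
noncomputable def semN : Term → PDist := semOf SmallN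

/-- One-step unfolding of the divergence inference system: a value diverges
with probability `0`; if `M ↦ N₁,…,Nₙ` and `Nᵢ` diverges with probability
`pᵢ`, then `M` diverges with probability `Σᵢ (1/n)pᵢ`. -/
def DivStep (Red : Term → List Term → Prop) (R : Term → ℝ≥0∞ → Prop)
    (M : Term) (p : ℝ≥0∞) : Prop :=
  (M.IsValue ∧ p = 0) ∨
    ∃ (Ns : List Term) (ps : Fin Ns.length → ℝ≥0∞),
      Red M Ns ∧ (∀ i, R (Ns.get i) (ps i)) ∧ p = (∑ i, ps i) / (Ns.length : ℝ≥0∞)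

/-- The coinductively-defined divergence relation `⇓div`: the union of all
consistent relations between terms and probabilities in `[0,1]`. -/
def Diverges (Red : Term → List Term → Prop) (M : Term) (p : ℝ≥0∞) : Prop :=
  ∃ R : Term → ℝ≥0∞ → Prop,
    (∀ N q, R N q → q ≤ 1 ∧ DivStep Red R N q) ∧ R M p

/-- Call-by-value divergence `⇓div`. -/
def DivV : Term → ℝ≥0∞ → Prop := Diverges RedV

/-- Call-by-name divergence `⇓div,n`. -/
def DivN : Term → ℝ≥0∞ → Prop := Diverges RedN

/-- One-step unfolding of the call-by-value big-step inference system. -/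
def BigVStep (R : Term → PDist → Prop) (M : Term) (D : PDist) : Prop :=
  (M.IsValue ∧ D = dirac M) ∨
  (∃ (N L : Term) (E F : PDist) (G : Term → Term → PDist),
      M = .app N L ∧ R N E ∧ R L F ∧
      (∀ P V, E (.lam P) ≠ 0 → V.IsValue → F V ≠ 0 → R (P.subst 0 V) (G P V)) ∧
      D = fun W => ∑' (P : Term), ∑' (V : Term), E (.lam P) * F V * G P V W) ∨
  (∃ (N L : Term) (E F : PDist),
      M = .choice N L ∧ R N E ∧ R L F ∧
      D = fun W => (E W * dsum F + F W * dsum E) / 2)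

/-- The coinductive call-by-value big-step relation `⇓v`: the union of all
consistent relations between terms and distributions. -/
def BigV (M : Term) (D : PDist) : Prop :=
  ∃ R : Term → PDist → Prop,
    (∀ N E, R N E → IsDist E ∧ BigVStep R N E) ∧ R M D

/-- One-step unfolding of the call-by-name big-step inference system. -/
def BigNStep (R : Term → PDist → Prop) (M : Term) (D : PDist) : Prop :=
  (M.IsValue ∧ D = dirac M) ∨
  (∃ (N L : Term) (E : PDist) (F : Term → PDist),
      M = .app N L ∧ R N E ∧
      (∀ P, E (.lam P) ≠ 0 → R (P.subst 0 L) (F P)) ∧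
      D = fun W => ∑' (P : Term), E (.lam P) * F P W) ∨
  (∃ (N L : Term) (E F : PDist),
      M = .choice N L ∧ R N E ∧ R L F ∧ D = fun W => (E W + F W) / 2)

/-- The coinductive call-by-name big-step relation `⇓n`. -/
def BigN (M : Term) (D : PDist) : Prop :=
  ∃ R : Term → PDist → Prop,
    (∀ N E, R N E → IsDist E ∧ BigNStep R N E) ∧ R M D

/-- Big-step semantics `⟪M⟫`: the pointwise infimum of all distributions
derivable for `M` in a big-step system. -/
noncomputable def bigSemOf (B : Term → PDist → Prop) (M : Term) : PDist :=
  fun W => ⨅ (D : PDist) (_ : B M D), D W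

theorem redV_not_value {M : Term} {Ns : List Term} (h : RedV M Ns) : ¬ M.IsValue := by
  intro hv
  cases h <;> cases hv

theorem redV_length {M : Term} {Ns : List Term} (h : RedV M Ns) : Ns.length ≠ 0 := by
  induction h <;> simp_all

theorem redV_det {M : Term} {Ns : List Term} (h : RedV M Ns) :
    ∀ {Ns' : List Term}, RedV M Ns' → Ns = Ns' := by
  induction h with
  | beta hv =>
    intro Ns' h'
    cases h' with
    | beta _ => rfl
    | appL h => exact absurd (Term.IsValue.lam _) (redV_not_value h)
    | appR _ h => exact absurd hv (redV_not_value h)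
  | choice hv hw =>
    intro Ns' h'
    cases h' with
    | choice _ _ => rfl
    | choiceL h => exact absurd hv (redV_not_value h)
    | choiceR _ h => exact absurd hw (redV_not_value h)
  | appL h ih =>
    intro Ns' h'
    cases h' with
    | beta _ => exact absurd (Term.IsValue.lam _) (redV_not_value h)
    | appL h2 => rw [ih h2]
    | appR hv _ => exact absurd hv (redV_not_value h)
  | appR hv h ih =>
    intro Ns' h'
    cases h' with
    | beta hw => exact absurd hw (redV_not_value h)
    | appL h2 => exact absurd hv (redV_not_value h2)
    | appR _ h2 => rw [ih h2]
  | choiceL h ih =>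
    intro Ns' h'
    cases h' with
    | choice hv _ => exact absurd hv (redV_not_value h)
    | choiceL h2 => rw [ih h2]
    | choiceR hv _ => exact absurd hv (redV_not_value h)
  | choiceR hv h ih =>
    intro Ns' h'
    cases h' with
    | choice _ hw => exact absurd hw (redV_not_value h)
    | choiceL h2 => exact absurd hv (redV_not_value h2)
    | choiceR _ h2 => rw [ih h2]

theorem closed_shift (d : ℕ) (V : Term) : ∀ (c k : ℕ), V.closedUnder k →
    (V.shift d c).closedUnder (k + d) := by
  induction V with
  | var n =>
    intro c k h
    simp only [Term.closedUnder] at h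
    simp only [Term.shift]
    split_ifs <;> simp only [Term.closedUnder] <;> omega
  | lam M ih =>
    intro c k h
    simp only [Term.closedUnder, Term.shift] at h ⊢
    have := ih (c + 1) (k + 1) h
    rwa [show k + 1 + d = k + d + 1 by omega] at this
  | app M N ih1 ih2 =>
    intro c k h
    exact ⟨ih1 _ _ h.1, ih2 _ _ h.2⟩
  | choice M N ih1 ih2 =>
    intro c k h
    exact ⟨ih1 _ _ h.1, ih2 _ _ h.2⟩

theorem closed_subst {V : Term} (hV : V.Closed) (M : Term) : ∀ (j : ℕ), M.closedUnder (j + 1) →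
    (M.subst j V).closedUnder j := by
  induction M with
  | var n =>
    intro j h
    simp only [Term.closedUnder] at h
    simp only [Term.subst]
    split_ifs with h1 h2
    · have := closed_shift j V 0 0 hV
      rwa [zero_add] at this
    · omega
    · simp only [Term.closedUnder]; omega
  | lam M ih =>
    intro j h
    exact ih (j + 1) h
  | app M N ih1 ih2 =>
    intro j h
    exact ⟨ih1 _ h.1, ih2 _ h.2⟩
  | choice M N ih1 ih2 =>
    intro j h
    exact ⟨ih1 _ h.1, ih2 _ h.2⟩

theorem redV_closed {M : Term} {Ns : List Term} (h : RedV M Ns) :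
    M.Closed → ∀ N ∈ Ns, N.Closed := by
  induction h with
  | beta hv =>
    intro hc N hN
    rw [List.mem_singleton] at hN
    subst hN
    exact closed_subst hc.2 _ 0 hc.1
  | choice hv hw =>
    intro hc N hN
    simp only [List.mem_cons, List.not_mem_nil, or_false] at hN
    rcases hN with rfl | rfl
    · exact hc.1
    · exact hc.2
  | appL h ih =>
    intro hc N hN
    obtain ⟨L, hL, rfl⟩ := List.mem_map.1 hN
    exact ⟨ih hc.1 L hL, hc.2⟩
  | appR hv h ih =>
    intro hc N hN
    obtain ⟨L, hL, rfl⟩ := List.mem_map.1 hN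
    exact ⟨hc.1, ih hc.2 L hL⟩
  | choiceL h ih =>
    intro hc N hN
    obtain ⟨L, hL, rfl⟩ := List.mem_map.1 hN
    exact ⟨ih hc.1 L hL, hc.2⟩
  | choiceR hv h ih =>
    intro hc N hN
    obtain ⟨L, hL, rfl⟩ := List.mem_map.1 hN
    exact ⟨hc.1, ih hc.2 L hL⟩

theorem progress (M : Term) : M.Closed → M.IsValue ∨ ∃ Ns, RedV M Ns := by
  induction M with
  | var n => intro _; exact Or.inl (.var n)
  | lam M _ => intro _; exact Or.inl (.lam M)
  | app M N ih1 ih2 =>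
    intro h
    right
    rcases ih1 h.1 with hv | ⟨Ls, hL⟩
    · rcases ih2 h.2 with hw | ⟨Ls, hL⟩
      · cases hv with
        | var n => exact absurd h.1 (Nat.not_lt_zero n)
        | lam P => exact ⟨_, .beta hw⟩
      · exact ⟨_, .appR hv hL⟩
    · exact ⟨_, .appL hL⟩
  | choice M N ih1 ih2 =>
    intro h
    right
    rcases ih1 h.1 with hv | ⟨Ls, hL⟩
    · rcases ih2 h.2 with hw | ⟨Ls, hL⟩
      · exact ⟨_, .choice hv hw⟩
      · exact ⟨_, .choiceR hv hL⟩
    · exact ⟨_, .choiceL hL⟩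

open Classical in
/-- Fuel-bounded evaluation. -/
noncomputable def approx : ℕ → Term → PDist
  | 0, _ => dzero
  | k + 1, M =>
    if M.IsValue then dirac M
    else if h : ∃ Ns, RedV M Ns then
      fun W => (∑ i : Fin h.choose.length, approx k (h.choose.get i) W)
        / (h.choose.length : ℝ≥0∞)
    else dzero

theorem approx_val {M : Term} (h : M.IsValue) (k : ℕ) : approx (k + 1) M = dirac M := by
  simp [approx, h]

theorem approx_step {M : Term} {Ns : List Term} (h : RedV M Ns) (k : ℕ) :
    approx (k + 1) M = fun W => (∑ i : Fin Ns.length, approx k (Ns.get i) W)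
        / (Ns.length : ℝ≥0∞) := by
  have hex : ∃ Ns, RedV M Ns := ⟨Ns, h⟩
  have he : hex.choose = Ns := (redV_det h hex.choose_spec).symm
  rw [approx, if_neg (redV_not_value h), dif_pos hex]
  generalize hex.choose = L at he
  subst he
  rfl

theorem approx_stuck {M : Term} (hv : ¬ M.IsValue) (h : ¬ ∃ Ns, RedV M Ns) (k : ℕ) :
    approx (k + 1) M = dzero := by
  rw [approx, if_neg hv, dif_neg h]

theorem approx_le_succ (k : ℕ) : ∀ (M W : Term), approx k M W ≤ approx (k + 1) M W := by
  induction k with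
  | zero => intro M W; simp [approx, dzero]
  | succ k ih =>
    intro M W
    by_cases hv : M.IsValue
    · rw [approx_val hv, approx_val hv]
    · by_cases h : ∃ Ns, RedV M Ns
      · obtain ⟨Ns, hr⟩ := h
        rw [approx_step hr, approx_step hr]
        exact ENNReal.div_le_div_right (Finset.sum_le_sum fun i _ => ih _ _) _
      · rw [approx_stuck hv h, approx_stuck hv h]

theorem approx_mono (M W : Term) : Monotone (fun k => approx k M W) :=
  monotone_nat_of_le_succ fun k => approx_le_succ k M W

theorem approx_conv (k : ℕ) : ∀ M : Term, SmallV M (approx k M) := by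
  induction k with
  | zero => intro M; exact Conv.bot M
  | succ k ih =>
    intro M
    by_cases hv : M.IsValue
    · rw [approx_val hv]; exact Conv.val hv
    · by_cases h : ∃ Ns, RedV M Ns
      · obtain ⟨Ns, hr⟩ := h
        rw [approx_step hr]
        exact Conv.step (fun i => approx k (Ns.get i)) hr fun i => ih _
      · rw [approx_stuck hv h]; exact Conv.bot M

theorem conv_le_approx {M : Term} {D : PDist} (h : SmallV M D) :
    ∃ k, ∀ W, D W ≤ approx k M W := by
  unfold SmallV at h
  induction h with
  | bot M => exact ⟨0, fun W => by simp [dzero]⟩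
  | val hv => exact ⟨1, fun W => by rw [approx_val hv]⟩
  | @step M Ns Ds hr _ ih =>
    choose k hk using ih
    refine ⟨Finset.univ.sup k + 1, fun W => ?_⟩
    rw [approx_step hr]
    refine ENNReal.div_le_div_right (Finset.sum_le_sum fun i _ => (hk i W).trans ?_) _
    exact approx_mono _ _ (Finset.le_sup (Finset.mem_univ i))

theorem semV_eq (M W : Term) : semV M W = ⨆ k, approx k M W := by
  apply le_antisymm
  · refine iSup₂_le fun D hD => ?_
    obtain ⟨k, hk⟩ := conv_le_approx hD
    exact (hk W).trans (le_iSup (fun k => approx k M W) k)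
  · exact iSup_le fun k => le_iSup₂ (f := fun (D : PDist) (_ : SmallV M D) => D W)
      (approx k M) (approx_conv k M)

theorem semV_eq_succ (M W : Term) : semV M W = ⨆ k, approx (k + 1) M W := by
  rw [semV_eq, (approx_mono M W).iSup_nat_add 1]

theorem dsum_dirac (V : Term) : dsum (dirac V) = 1 := by
  simp [dsum, dirac]

theorem dsum_avg (Ns : List Term) (F : Fin Ns.length → PDist) :
    dsum (fun W => (∑ i, F i W) / (Ns.length : ℝ≥0∞))
      = (∑ i, dsum (F i)) / (Ns.length : ℝ≥0∞) := by
  simp only [dsum, div_eq_mul_inv]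
  rw [ENNReal.tsum_mul_right, Summable.tsum_finsetSum fun _ _ => ENNReal.summable]

theorem dsum_semV_val {M : Term} (h : M.IsValue) : dsum (semV M) = 1 := by
  have : semV M = dirac M := by
    funext W
    rw [semV_eq_succ]
    simp [approx_val h]
  rw [this, dsum_dirac]

theorem dsum_semV_step {M : Term} {Ns : List Term} (h : RedV M Ns) :
    dsum (semV M) = (∑ i : Fin Ns.length, dsum (semV (Ns.get i))) / (Ns.length : ℝ≥0∞) := by
  have : semV M = fun W => (∑ i : Fin Ns.length, semV (Ns.get i) W) / (Ns.length : ℝ≥0∞) := by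
    funext W
    rw [semV_eq_succ]
    simp only [approx_step h, semV_eq]
    rw [ENNReal.finsetSum_iSup_of_monotone fun i => approx_mono _ _, ENNReal.iSup_div]
  rw [this, dsum_avg]

theorem dsum_approx_le (k : ℕ) : ∀ M : Term, dsum (approx k M) ≤ 1 := by
  induction k with
  | zero => intro M; simp [approx, dsum, dzero]
  | succ k ih =>
    intro M
    by_cases hv : M.IsValue
    · rw [approx_val hv, dsum_dirac]
    · by_cases h : ∃ Ns, RedV M Ns
      · obtain ⟨Ns, hr⟩ := h
        rw [approx_step hr, dsum_avg]
        refine ENNReal.div_le_of_le_mul ?_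
        refine (Finset.sum_le_sum fun i _ => ih (Ns.get i)).trans ?_
        simp
      · rw [approx_stuck hv h]; simp [dsum, dzero]

theorem dsum_semV_le (M : Term) : dsum (semV M) ≤ 1 := by
  rw [dsum, ENNReal.tsum_eq_iSup_sum]
  refine iSup_le fun s => ?_
  simp only [semV_eq]
  rw [ENNReal.finsetSum_iSup_of_monotone fun W => approx_mono _ _]
  exact iSup_le fun k => (ENNReal.sum_le_tsum s).trans (dsum_approx_le k M)

/-- `1` minus the total mass of the call-by-value small-step
semantics of `M` is a derivable divergence probability for `M`. -/
theorem divV_one_sub_semV (M : Term) (hM : M.Closed) :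
    DivV M (1 - dsum (semV M)) := by
  refine ⟨fun N q => N.Closed ∧ q = 1 - dsum (semV N), ?_, hM, rfl⟩
  rintro N q ⟨hN, rfl⟩
  refine ⟨tsub_le_self, ?_⟩
  rcases progress N hN with hv | ⟨Ns, hr⟩
  · left
    refine ⟨hv, ?_⟩
    rw [dsum_semV_val hv, tsub_self]
  · right
    refine ⟨Ns, fun i => 1 - dsum (semV (Ns.get i)), hr, fun i => ⟨?_, rfl⟩, ?_⟩
    · exact redV_closed hr hN _ (List.get_mem _ _)
    · rw [dsum_semV_step hr]
      have hn : (Ns.length : ℝ≥0∞) ≠ 0 := by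
        exact_mod_cast redV_length hr
      have hn' : (Ns.length : ℝ≥0∞) ≠ ⊤ := ENNReal.natCast_ne_top _
      have key : (∑ i : Fin Ns.length, (1 - dsum (semV (Ns.get i))))
          + ∑ i : Fin Ns.length, dsum (semV (Ns.get i)) = Ns.length := by
        rw [← Finset.sum_add_distrib]
        rw [Finset.sum_congr rfl (fun i _ => tsub_add_cancel_of_le (dsum_semV_le (Ns.get i)))]
        simp
      have hfin : (∑ i : Fin Ns.length, dsum (semV (Ns.get i))) / (Ns.length : ℝ≥0∞) ≠ ⊤ := by
        refine (ENNReal.div_lt_top ?_ hn).ne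
        exact ne_top_of_le_ne_top hn' (key ▸ le_add_self)
      refine (ENNReal.eq_sub_of_add_eq hfin ?_).symm
      rw [← ENNReal.add_div, key, ENNReal.div_self hn hn']
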